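/- Let G be a finite nonabelian transitively commutative group with center Z = Z(G), and let M_1, …, M_k be its maximal abelian subgroups (equivalently, the distinct centralizers C_G(a_1), …, C_G(a_k) of noncentral elements, which cover G). Let G(2) be the amalgamated free product of M_1, …, M_k along the common central subgroup Z (the pushout, in the category of groups, of the inclusions Z ↪ M_i), and let π : G(2) → G be the canonical homomorphism induced by the inclusions M_i ≤ G. Then the kernel of π is a free group of rank N_G = 1 − [G : Z] + Σ_{i=1}^{k} ([G : Z] − [G : M_i]). -/

import Mathlib

open Monoid

theorem tcaux_core {P Q K : Type*} [Group P] [Group Q] [Group K] {ι : Type*}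
    {A : ι → Type*} [∀ i, Group (A i)]
    (qb : P →* Q) (hqb : Function.Surjective qb)
    (j : K →* P) (hj : ∀ k, qb (j k) = 1)
    (κ : qb.ker →* K) (hκ : ∀ k, κ ⟨j k, hj k⟩ = k)
    (o : ∀ i, A i →* P)
    (hind : ∀ motive : P → Prop, (∀ i a, motive (o i a)) →
      (∀ x y, motive x → motive y → motive (x * y)) → ∀ x, motive x)
    (hfree : ∀ i a p (h : p⁻¹ * o i a * p ∈ qb.ker), qb (o i a) = 1 → κ ⟨p⁻¹ * o i a * p, h⟩ = 1)
    (r : ι → Q → Q) (hr1 : ∀ i q, ∃ a, q = qb (o i a) * r i q)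
    (hr2 : ∀ i a q, r i (qb (o i a) * q) = r i q)
    (hc : ∀ y : ι → Q → FreeGroup {e : ι × Q // r e.1 e.2 ≠ e.2},
      ∃ c : P → Q → FreeGroup {e : ι × Q // r e.1 e.2 ≠ e.2},
        (∀ p p' q, c (p * p') q = c p (qb p' * q) * c p' q) ∧
        (∀ i a q, c (o i a) q = y i (qb (o i a) * q) * (y i q)⁻¹) ∧
        (∀ l : qb.ker, ∀ q, c (j (κ l)) q = c l q)) :
    Nonempty (FreeGroup {e : ι × Q // r e.1 e.2 ≠ e.2} ≃* Coprod K (FreeGroup {q : Q // q ≠ 1})) := by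
  classical
  obtain ⟨s, hs, hs1⟩ : ∃ s : Q → P, (∀ q, qb (s q) = q) ∧ s 1 = 1 := by
    obtain ⟨s, hs⟩ := hqb.hasRightInverse
    exact ⟨fun q => s q * (s 1)⁻¹, fun q => by simp [hs _], by simp⟩
  let y : ι → Q → FreeGroup {e : ι × Q // r e.1 e.2 ≠ e.2} := fun i q =>
    if h : r i q ≠ q then FreeGroup.of ⟨(i, q), h⟩ else 1
  have hy : ∀ i q (h : r i q ≠ q), y i q = FreeGroup.of ⟨(i, q), h⟩ := fun i q h => dif_pos h
  have hrr : ∀ i q, r i (r i q) = r i q := by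
    intro i q
    obtain ⟨a, ha⟩ := hr1 i q
    have := hr2 i a (r i q)
    rw [← ha] at this
    exact this.symm
  have hyr : ∀ i q, y i (r i q) = 1 := fun i q => dif_neg (by simp [hrr])
  obtain ⟨c, hcm, hco, hcκ⟩ := hc y
  have hc1 : ∀ q, c 1 q = 1 := by
    intro q
    have := hcm 1 1 q
    simpa using this
  let x : Q → Coprod K (FreeGroup {q : Q // q ≠ 1}) := fun q =>
    if h : q ≠ 1 then Coprod.inr (FreeGroup.of ⟨q, h⟩) else 1
  have hx1 : x 1 = 1 := dif_neg (by simp)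
  have hx : ∀ q (h : q ≠ 1), x q = Coprod.inr (FreeGroup.of ⟨q, h⟩) := fun q h => dif_pos h
  have hd : ∀ p q, (s (qb p * q))⁻¹ * p * s q ∈ qb.ker := by
    intro p q
    simp [MonoidHom.mem_ker, hs, mul_assoc]
  let c₁ : P → Q → Coprod K (FreeGroup {q : Q // q ≠ 1}) := fun p q =>
    x (qb p * q) * Coprod.inl (κ ⟨_, hd p q⟩) * (x q)⁻¹
  have c₁def : ∀ p q, c₁ p q = x (qb p * q) * Coprod.inl (κ ⟨_, hd p q⟩) * (x q)⁻¹ :=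
    fun _ _ => rfl
  have hc₁m : ∀ p p' q, c₁ (p * p') q = c₁ p (qb p' * q) * c₁ p' q := by
    intro p p' q
    have e : (⟨_, hd (p * p') q⟩ : qb.ker) = ⟨_, hd p (qb p' * q)⟩ * ⟨_, hd p' q⟩ := by
      ext
      simp [mul_assoc]
    rw [c₁def, e, c₁def, c₁def, map_mul κ, map_mul Coprod.inl]
    generalize κ ⟨_, hd p (qb p' * q)⟩ = u
    generalize κ ⟨_, hd p' q⟩ = v
    simp [mul_assoc]
  have hc₁1 : ∀ q, c₁ 1 q = 1 := by
    intro q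
    have := hc₁m 1 1 q
    simpa using this
  have hc₁f : ∀ i a q, qb (o i a) = 1 → c₁ (o i a) q = 1 := by
    intro i a q h
    have e : (s (qb (o i a) * q))⁻¹ * (o i a) * s q = (s q)⁻¹ * o i a * s q := by simp [h]
    have e2 : κ ⟨_, hd (o i a) q⟩ = 1 := by
      rw [← hfree i a (s q) (by rw [← e]; exact hd _ _) h]
      congr 2
    rw [c₁def, e2]
    simp [h]
  choose w hw using hr1
  let Φ : FreeGroup {e : ι × Q // r e.1 e.2 ≠ e.2} →* Coprod K (FreeGroup {q : Q // q ≠ 1}) :=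
    FreeGroup.lift fun e => c₁ (o e.1.1 (w e.1.1 e.1.2)) (r e.1.1 e.1.2)
  let Ψ₁ : K →* FreeGroup {e : ι × Q // r e.1 e.2 ≠ e.2} :=
    MonoidHom.mk' (fun k => c (j k) 1) (by
      intro a b
      simp [hcm, hj])
  let Ψ : Coprod K (FreeGroup {q : Q // q ≠ 1}) →* FreeGroup {e : ι × Q // r e.1 e.2 ≠ e.2} :=
    Coprod.lift Ψ₁ (FreeGroup.lift fun q => c (s q.1) 1)
  have hΨk : ∀ k, Ψ (Coprod.inl k) = c (j k) 1 := fun k => rfl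
  have hΨx : ∀ q, Ψ (x q) = c (s q) 1 := by
    intro q
    by_cases h : q = 1
    · subst h
      rw [hx1, hs1, hc1, map_one]
    · rw [hx q h]
      simp [Ψ]
  have hΨc : ∀ p q, Ψ (c₁ p q) = c p q := by
    intro p q
    rw [c₁def, map_mul, map_mul, map_inv, hΨx, hΨx, hΨk, hcκ]
    have h1 := hcm (s (qb p * q)) ((s (qb p * q))⁻¹ * p * s q) 1
    have h2 := hcm p (s q) 1
    have h3 : qb ((s (qb p * q))⁻¹ * p * s q) = 1 := hd p q
    rw [h3] at h1
    rw [mul_inv_eq_iff_eq_mul]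
    simp only [mul_one] at h1 h2
    rw [← h1]
    simp only [hs] at h2
    rw [← h2]
    congr 1
    group
  have hΦy : ∀ i q, Φ (y i q) = c₁ (o i (w i q)) (r i q) := by
    intro i q
    by_cases h : r i q = q
    · have : y i q = 1 := dif_neg (by simp [h])
      rw [this, map_one, hc₁f]
      have := hw i q
      rw [h] at this
      exact (right_eq_mul.mp this)
    · rw [hy i q h]
      simp [Φ]
  have hΦc : ∀ p, ∀ q, Φ (c p q) = c₁ p q := by
    apply hind
    · intro i a q
      rw [hco, map_mul, map_inv, hΦy, hΦy, hr2, mul_inv_eq_iff_eq_mul]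
      have h1 := hc₁m (o i a) (o i (w i q)) (r i q)
      rw [← hw] at h1
      rw [← h1, ← map_mul]
      have e : w i (qb (o i a) * q) = (a * w i q) * ((a * w i q)⁻¹ * w i (qb (o i a) * q)) := by
        group
      have h2 : qb (o i ((a * w i q)⁻¹ * w i (qb (o i a) * q))) = 1 := by
        have h3 := hw i (qb (o i a) * q)
        rw [hr2] at h3
        have h4 := hw i q
        rw [map_mul, map_mul, map_inv, map_inv, inv_mul_eq_one, map_mul, map_mul]
        apply mul_right_cancel (b := r i q)
        rw [← h3, mul_assoc, ← h4]
      rw [e, map_mul (o i) (a * w i q), hc₁m, hc₁f _ _ _ h2, h2]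
      simp
    · intro p p' h h' q
      rw [hcm, map_mul, h, h', hc₁m]
  refine ⟨MonoidHom.toMulEquiv Φ Ψ ?_ ?_⟩
  · ext ⟨⟨i, q⟩, h⟩
    have : Φ (FreeGroup.of ⟨(i, q), h⟩) = c₁ (o i (w i q)) (r i q) := by simp [Φ]
    simp only [MonoidHom.comp_apply, this, hΨc, hco, hyr, ← hw]
    rw [hy i q h]
    simp
  · apply Coprod.hom_ext
    · ext k
      simp only [MonoidHom.comp_apply, hΨk, hΦc, MonoidHom.id_apply]
      rw [c₁def]
      have : (⟨_, hd (j k) 1⟩ : qb.ker) = ⟨j k, hj k⟩ := by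
        ext
        simp [hj, hs1]
      rw [this, hκ]
      simp [hj, hx1]
    · ext ⟨q, h⟩
      simp only [MonoidHom.comp_apply, MonoidHom.id_apply]
      rw [← hx q h, hΨx, hΦc, c₁def]
      have : (⟨_, hd (s q) 1⟩ : qb.ker) = 1 := by
        ext
        simp [hs, hs1]
      rw [this]
      simp [hs, hx1]

def tcaux_sum (S T : Type*) : Coprod (FreeGroup S) (FreeGroup T) ≃* FreeGroup (S ⊕ T) :=
  MonoidHom.toMulEquiv
    (Coprod.lift (FreeGroup.map Sum.inl) (FreeGroup.map Sum.inr))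
    (FreeGroup.lift (Sum.elim (fun s => Coprod.inl (FreeGroup.of s))
      (fun t => Coprod.inr (FreeGroup.of t))))
    (by
      apply Coprod.hom_ext <;> ext <;> simp)
    (by
      ext (s | t) <;> simp)

theorem tcaux_count {E T K : Type*} [Group K] [Finite E] [Finite T]
    (e : FreeGroup E ≃* Coprod K (FreeGroup T)) :
    ∃ n : ℕ, n + Nat.card T = Nat.card E ∧ Nonempty (K ≃* FreeGroup (Fin n)) := by
  let f : K →* FreeGroup E := e.symm.toMonoidHom.comp Coprod.inl
  have hf : Function.Injective f := e.symm.injective.comp Coprod.inl_injective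
  have : IsFreeGroup K := IsFreeGroup.ofMulEquiv (MonoidHom.ofInjective hf).symm
  let g := IsFreeGroup.toFreeGroup K
  let e2 : FreeGroup E ≃* FreeGroup (IsFreeGroup.Generators K ⊕ T) :=
    (e.trans (MulEquiv.coprodCongr g (MulEquiv.refl _))).trans (tcaux_sum _ _)
  let e3 := Equiv.ofFreeGroupEquiv e2
  have : Finite (IsFreeGroup.Generators K ⊕ T) := Finite.of_equiv _ e3
  have : Finite (IsFreeGroup.Generators K) := Finite.sum_left T
  refine ⟨Nat.card (IsFreeGroup.Generators K), ?_, ⟨g.trans (FreeGroup.freeGroupCongr (Finite.equivFin _))⟩⟩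
  rw [Nat.card_congr e3, Nat.card_sum]

theorem tcaux_card {ι Q : Type*} [Fintype ι] [Finite Q] (B : ι → Type*)
    (ρ : ∀ i, Q → B i) (σ : ∀ i, B i → Q) (h : ∀ i b, ρ i (σ i b) = b) :
    (Nat.card {e : ι × Q // σ e.1 (ρ e.1 e.2) ≠ e.2} : ℤ)
      = ∑ i, ((Nat.card Q : ℤ) - Nat.card (B i)) := by
  classical
  let e : {e : ι × Q // σ e.1 (ρ e.1 e.2) ≠ e.2} ≃ Σ i, {q : Q // σ i (ρ i q) ≠ q} :=
    { toFun := fun e => ⟨e.1.1, e.1.2, e.2⟩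
      invFun := fun e => ⟨(e.1, e.2.1), e.2.2⟩
      left_inv := fun _ => rfl
      right_inv := fun _ => rfl }
  rw [Nat.card_congr e, Nat.card_sigma, Nat.cast_sum]
  refine Finset.sum_congr rfl fun i _ => ?_
  have e1 : {q : Q // σ i (ρ i q) = q} ≃ B i :=
    { toFun := fun q => ρ i q.1
      invFun := fun b => ⟨σ i b, by rw [h]⟩
      left_inv := fun q => Subtype.ext q.2
      right_inv := fun b => h i b }
  have e2 := Nat.card_congr (Equiv.sumCompl (fun q : Q => σ i (ρ i q) = q))
  rw [Nat.card_sum, Nat.card_congr e1] at e2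
  rw [← e2]
  push_cast
  ring

theorem tcaux_cocycle {G : Type*} [Group G] {ι : Type*} (Z : Subgroup G) [Z.Normal]
    (M : ι → Subgroup G) (hZ : ∀ i, Z ≤ M i)
    (π : PushoutI (fun i => Subgroup.inclusion (hZ i)) →* G)
    (hπo : ∀ i m, π (PushoutI.of i m) = m) (hπb : ∀ z, π (PushoutI.base _ z) = z)
    {X : Type*} [Group X] (y : ι → G ⧸ Z → X) :
    ∃ c : PushoutI (fun i => Subgroup.inclusion (hZ i)) → G ⧸ Z → X,
      (∀ p p' q, c (p * p') q = c p ((π p' : G ⧸ Z) * q) * c p' q) ∧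
      (∀ i (m : M i) q, c (PushoutI.of i m) q = y i (((m : G) : G ⧸ Z) * q) * (y i q)⁻¹) ∧
      (∀ z q, c (PushoutI.base _ z) q = 1) := by
  let act : G →* Equiv.Perm ((G ⧸ Z) × X) :=
    { toFun := fun g => Equiv.prodCongr (Equiv.mulLeft (g : G ⧸ Z)) (Equiv.refl X)
      map_one' := by ext ⟨q, x⟩ <;> simp
      map_mul' := by
        intro a b
        ext ⟨q, x⟩ <;> simp [mul_assoc] }
  have hact : ∀ g q x, act g (q, x) = ((g : G ⧸ Z) * q, x) := fun _ _ _ => rfl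
  let T : ι → Equiv.Perm ((G ⧸ Z) × X) := fun i =>
    { toFun := fun v => (v.1, y i v.1 * v.2)
      invFun := fun v => (v.1, (y i v.1)⁻¹ * v.2)
      left_inv := fun v => by simp
      right_inv := fun v => by simp }
  have hz : ∀ z : Z, act (z : G) = 1 := by
    intro z
    ext ⟨q, x⟩ <;> simp [hact, (QuotientGroup.eq_one_iff (z : G)).2 z.2]
  let θ : PushoutI (fun i => Subgroup.inclusion (hZ i)) →* Equiv.Perm ((G ⧸ Z) × X) :=
    PushoutI.lift (fun i => (MulAut.conj (T i)).toMonoidHom.comp (act.comp (M i).subtype))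
      (act.comp Z.subtype) (by
        intro i
        apply MonoidHom.ext
        intro z
        have h := hz z
        simp only [MonoidHom.comp_apply, Subgroup.coe_subtype, Subgroup.coe_inclusion, h]
        simp)
  have hθo : ∀ i (m : M i) q x, θ (PushoutI.of i m) (q, x) =
      (((m : G) : G ⧸ Z) * q, y i (((m : G) : G ⧸ Z) * q) * ((y i q)⁻¹ * x)) := by
    intro i m q x
    simp only [θ, PushoutI.lift_of]
    rfl
  have hθb : ∀ z, θ (PushoutI.base _ z) = 1 := by
    intro z
    simp only [θ, PushoutI.lift_base]
    exact hz z
  have hθ : ∀ p, ∀ q x, θ p (q, x) = ((π p : G ⧸ Z) * q, (θ p (q, 1)).2 * x) := by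
    intro p
    induction p using PushoutI.induction_on with
    | of i m =>
      intro q x
      simp only [hθo, hπo, mul_one, mul_assoc]
    | base z =>
      intro q x
      rw [hθb, hπb, (QuotientGroup.eq_one_iff (z : G)).2 z.2]
      simp
    | mul a b ha hb =>
      intro q x
      have h1 := ha ((π b : G ⧸ Z) * q) ((θ b (q, 1)).2 * x)
      have h2 := ha ((π b : G ⧸ Z) * q) ((θ b (q, 1)).2 * 1)
      rw [map_mul, Equiv.Perm.mul_apply, Equiv.Perm.mul_apply, hb q x, h1]
      have h5 : (θ a (θ b (q, 1))).2 = (θ a ((π b : G ⧸ Z) * q, 1)).2 * (θ b (q, 1)).2 := by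
        conv_lhs => rw [hb q 1, h2, mul_one]
      rw [h5]
      simp [mul_assoc]
  refine ⟨fun p q => (θ p (q, 1)).2, ?_, ?_, ?_⟩
  · intro p p' q
    simp only
    rw [map_mul, Equiv.Perm.mul_apply, hθ p' q 1, hθ p _ _]
    try simp
  · intro i m q
    simp [hθo]
  · intro z q
    simp [hθb]



/-- For a finite nonabelian transitively commutative group `G` with center `Z`
and maximal abelian subgroups `M 1, …, M k`, the kernel of the canonical map
from the amalgamated free product of the `M i` along `Z` to `G` is a free group
of rank `N_G = 1 - [G : Z] + ∑ ([G : Z] - [G : M i])`. -/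
theorem tc_kernel_of_amalgamated_product_is_free
    (G : Type*) [Group G] [Finite G]
    (hnonab : ¬ ∀ a b : G, a * b = b * a)
    (hTC : ∀ g : G, g ∉ Subgroup.center G →
      ∀ x ∈ Subgroup.centralizer {g}, ∀ y ∈ Subgroup.centralizer {g}, x * y = y * x)
    (k : ℕ) (M : Fin k → Subgroup G)
    (hinj : Function.Injective M)
    (hmax : ∀ i, (∀ x ∈ M i, ∀ y ∈ M i, x * y = y * x) ∧
      ∀ N : Subgroup G, (∀ x ∈ N, ∀ y ∈ N, x * y = y * x) → M i ≤ N → M i = N)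
    (hall : ∀ N : Subgroup G,
      ((∀ x ∈ N, ∀ y ∈ N, x * y = y * x) ∧
        ∀ N' : Subgroup G, (∀ x ∈ N', ∀ y ∈ N', x * y = y * x) → N ≤ N' → N = N') →
      ∃ i, N = M i)
    (hZle : ∀ i, Subgroup.center G ≤ M i) :
    ∃ N_G : ℕ,
      (N_G : ℤ) = 1 - ((Subgroup.center G).index : ℤ) +
        ∑ i : Fin k, (((Subgroup.center G).index : ℤ) - ((M i).index : ℤ)) ∧
      Nonempty
        ((MonoidHom.ker
          (Monoid.PushoutI.lift (fun i => (M i).subtype)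
            ((Subgroup.center G).subtype)
            (fun i => by ext x; rfl) :
            Monoid.PushoutI (fun i => Subgroup.inclusion (hZle i)) →* G)) ≃*
          FreeGroup (Fin N_G)) := by
  classical
  have hcov : ∀ g : G, ∃ i, g ∈ M i := by
    intro g
    have h0 : ∀ x ∈ Subgroup.zpowers g, ∀ y ∈ Subgroup.zpowers g, x * y = y * x := by
      rintro _ ⟨a, rfl⟩ _ ⟨b, rfl⟩
      exact zpow_mul_comm g a b
    obtain ⟨N, hN, hm⟩ := Finite.exists_le_maximal
      (p := fun N : Subgroup G => ∀ x ∈ N, ∀ y ∈ N, x * y = y * x) h0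
    obtain ⟨i, rfl⟩ := hall N ⟨hm.1, fun N' h h' => le_antisymm h' (hm.2 h h')⟩
    exact ⟨i, hN (Subgroup.mem_zpowers g)⟩
  obtain ⟨i₀, -⟩ := hcov 1
  set π : Monoid.PushoutI (fun i => Subgroup.inclusion (hZle i)) →* G :=
    Monoid.PushoutI.lift (fun i => (M i).subtype) ((Subgroup.center G).subtype)
            (fun i => by ext x; rfl) with hπ
  have hπo : ∀ i (m : M i), π (PushoutI.of i m) = m := fun i m => by
    rw [hπ, PushoutI.lift_of]; rfl
  have hπb : ∀ z, π (PushoutI.base _ z) = z := fun z => by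
    rw [hπ, PushoutI.lift_base]; rfl
  clear_value π
  have hbo : ∀ i (m : M i) (h : (m : G) ∈ Subgroup.center G),
      (PushoutI.of i m : Monoid.PushoutI (fun i => Subgroup.inclusion (hZle i))) =
        PushoutI.base _ ⟨m, h⟩ := by
    intro i m h
    rw [← PushoutI.of_apply_eq_base _ i]
    rfl
  have hcen : ∀ z p, PushoutI.base (fun i => Subgroup.inclusion (hZle i)) z * p
      = p * PushoutI.base _ z := by
    intro z p
    induction p using PushoutI.induction_on with
    | of i m =>
      rw [← PushoutI.of_apply_eq_base _ i, ← map_mul, ← map_mul]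
      congr 1
      exact Subtype.ext ((hmax i).1 _ (hZle i z.2) _ m.2)
    | base z' =>
      rw [← map_mul, ← map_mul]
      congr 1
      exact Subtype.ext ((hmax i₀).1 _ (hZle i₀ z.2) _ (hZle i₀ z'.2))
    | mul a b ha hb => rw [← mul_assoc, ha, mul_assoc, hb, mul_assoc]
  let qb : Monoid.PushoutI (fun i => Subgroup.inclusion (hZle i)) →* G ⧸ Subgroup.center G :=
    (QuotientGroup.mk' (Subgroup.center G)).comp π
  have hqb : ∀ p, qb p = ((π p : G) : G ⧸ Subgroup.center G) := fun _ => rfl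
  have hker : ∀ l : qb.ker, π l ∈ Subgroup.center G := fun l =>
    (QuotientGroup.eq_one_iff _).1 l.2
  let κ : qb.ker →* π.ker := MonoidHom.mk'
    (fun l => ⟨l.1 * (PushoutI.base (fun i => Subgroup.inclusion (hZle i)) ⟨π l.1, hker l⟩)⁻¹, by
      rw [MonoidHom.mem_ker, map_mul, map_inv, hπb]; simp⟩) (by
      intro a b
      apply Subtype.ext
      have e : (⟨π ↑(a * b), hker (a * b)⟩ : Subgroup.center G) =
        ⟨π b, hker b⟩ * ⟨π a, hker a⟩ := by
        apply Subtype.ext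
        have := (Subgroup.mem_center_iff.1 (hker a)) (π b)
        simp [this]
      have h1 := hcen ⟨π a, hker a⟩⁻¹ b
      rw [map_inv] at h1
      change (a.1 * b.1) * (PushoutI.base (fun i => Subgroup.inclusion (hZle i)) ⟨π ↑(a * b), hker (a * b)⟩)⁻¹ =
        (a.1 * (PushoutI.base (fun i => Subgroup.inclusion (hZle i)) ⟨π a.1, hker a⟩)⁻¹) * (b.1 * (PushoutI.base (fun i => Subgroup.inclusion (hZle i)) ⟨π b.1, hker b⟩)⁻¹)
      rw [e, map_mul, mul_inv_rev]
      rw [mul_assoc a.1, ← mul_assoc b.1, ← h1]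
      simp only [mul_assoc])
  have hκdef : ∀ l, (κ l).1 = l.1 * (PushoutI.base (fun i => Subgroup.inclusion (hZle i)) ⟨π l.1, hker l⟩)⁻¹ :=
    fun _ => rfl
  have hρ : ∀ i, ∃ ρ : G ⧸ Subgroup.center G → G ⧸ M i, ∀ g : G, ρ g = ((g⁻¹ : G) : G ⧸ M i) := by
    intro i
    refine ⟨fun q => Quotient.liftOn' q (fun g => ((g⁻¹ : G) : G ⧸ M i)) ?_, fun g => rfl⟩
    intro a b h
    rw [QuotientGroup.leftRel_apply] at h
    rw [QuotientGroup.eq]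
    have h2 := (Subgroup.mem_center_iff.1 h) a
    rw [mul_inv_cancel_left] at h2
    have h3 : Commute a b := by
      rw [commute_iff_eq]
      conv_lhs => rw [h2]
      group
    have h4 : a⁻¹⁻¹ * b⁻¹ = (a⁻¹ * b)⁻¹ := by
      rw [inv_inv, mul_inv_rev, inv_inv]
      exact h3.inv_right.eq
    rw [h4]
    exact (M i).inv_mem (hZle i h)
  choose ρ hρ using hρ
  have hρs : ∀ i, Function.Surjective (ρ i) := by
    intro i b
    induction b using QuotientGroup.induction_on with
    | H g => exact ⟨((g⁻¹ : G) : G ⧸ Subgroup.center G), by rw [hρ, inv_inv]⟩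
  choose σ hσ using hρs
  have hcore := tcaux_core (P := Monoid.PushoutI (fun i => Subgroup.inclusion (hZle i)))
    (Q := G ⧸ Subgroup.center G) (K := π.ker) (A := fun i => M i) qb ?_ π.ker.subtype ?_ κ ?_
    (fun i => PushoutI.of (G := fun i => M i) (φ := fun i => Subgroup.inclusion (hZle i)) i) ?_ ?_ (fun i q => σ i (ρ i q)) ?_ ?_ ?_
  · obtain ⟨e⟩ := hcore
    obtain ⟨n, hn, hF⟩ := tcaux_count e
    refine ⟨n, ?_, hF⟩
    have h1 := tcaux_card (fun i => G ⧸ M i) ρ σ hσ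
    have h2 : Nat.card {q : G ⧸ Subgroup.center G // q ≠ 1} + 1 =
        Nat.card (G ⧸ Subgroup.center G) := by
      have e2 := Nat.card_congr (Equiv.sumCompl (fun q : G ⧸ Subgroup.center G => q = 1))
      rw [Nat.card_sum, Nat.card_unique] at e2
      rw [← e2, add_comm]
    have h3 : (n : ℤ) + (Nat.card {q : G ⧸ Subgroup.center G // q ≠ 1} : ℤ) = _ :=
      (by exact_mod_cast hn : _ = (Nat.card _ : ℤ)).trans h1
    have h4 : (Nat.card {q : G ⧸ Subgroup.center G // q ≠ 1} : ℤ) + 1 =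
        Nat.card (G ⧸ Subgroup.center G) := by exact_mod_cast h2
    simp only [Subgroup.index]
    linarith
  · intro q
    induction q using QuotientGroup.induction_on with
    | H g =>
      obtain ⟨i, hi⟩ := hcov g
      exact ⟨PushoutI.of i ⟨g, hi⟩, by rw [hqb, hπo]⟩
  · intro k
    rw [hqb, Subgroup.coe_subtype, k.2]
    rfl
  · intro k
    apply Subtype.ext
    rw [hκdef]
    have : (⟨π k.1, (by rw [k.2]; exact one_mem _)⟩ : Subgroup.center G) = 1 :=
      Subtype.ext k.2
    simp [this]
  · intro motive ho hm x
    induction x using PushoutI.induction_on with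
    | of i m => exact ho i m
    | base z => rw [← PushoutI.of_apply_eq_base _ i₀]; exact ho _ _
    | mul a b ha hb => exact hm a b ha hb
  · intro i a p h ha
    have hz : (a : G) ∈ Subgroup.center G := by
      rw [hqb, hπo] at ha
      exact (QuotientGroup.eq_one_iff _).1 ha
    apply Subtype.ext
    rw [hκdef]
    have e : p⁻¹ * PushoutI.of i a * p = PushoutI.base _ ⟨a, hz⟩ := by
      rw [hbo i a hz, mul_assoc, hcen]
      group
    simp only [e, hπb]
    simp
  · intro i q
    have h : ρ i q = ρ i (σ i (ρ i q)) := (hσ _ _).symm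
    generalize σ i (ρ i q) = q' at h
    induction q using QuotientGroup.induction_on with
    | H g =>
      induction q' using QuotientGroup.induction_on with
      | H g' =>
        rw [hρ, hρ, QuotientGroup.eq, inv_inv] at h
        refine ⟨⟨_, h⟩, ?_⟩
        rw [hqb, hπo, ← QuotientGroup.mk_mul]
        simp
  · intro i a q
    congr 1
    induction q using QuotientGroup.induction_on with
    | H g =>
      rw [hqb, hπo, ← QuotientGroup.mk_mul, hρ, hρ, QuotientGroup.eq]
      simp
  · intro y
    obtain ⟨c, h1, h2, h3⟩ := tcaux_cocycle (Subgroup.center G) M hZle π hπo hπb y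
    refine ⟨c, h1, ?_, ?_⟩
    · intro i a q
      rw [h2, hqb, hπo]
    · intro l q
      rw [Subgroup.coe_subtype, hκdef, h1, ← map_inv, h3, hπb]
      have : (((⟨π l, hker l⟩⁻¹ : Subgroup.center G) : G) : G ⧸ Subgroup.center G) = 1 :=
        (QuotientGroup.eq_one_iff _).2 (Subtype.mem _)
      rw [this, one_mul, mul_one]
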